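/- Let R be a Gorenstein local Noetherian ring of dimension 1 and let R ⊆ S ⊆ Q(R) be a module finite birational extension. Then the following are equivalent: (i) S is a Gorenstein ring; (ii) S ≅ Hom_R(S, R) as R-modules; (iii) the conductor c_R(S) = (R : S) is a stable ideal. -/

import Mathlib

set_option maxHeartbeats 1000000
set_option synthInstance.maxHeartbeats 400000

open CategoryTheory

universe u

/-- The `i`-th Ext module `Ext_A^i(M, N)` over a commutative ring `A`. -/
noncomputable def ExtModule (A : Type u) [CommRing A] (M N : Type u)
    [AddCommGroup M] [Module A M] [AddCommGroup N] [Module A N] (i : ℕ) : ModuleCat.{u} A :=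
  ((Ext A (ModuleCat.{u} A) i).obj (Opposite.op (ModuleCat.of A M))).obj (ModuleCat.of A N)

/-- A module is torsion-free if nonzerodivisors of the ring act injectively. -/
def IsTorsionFreeModule (A : Type*) [CommRing A] (M : Type*) [AddCommGroup M]
    [Module A M] : Prop :=
  ∀ a ∈ nonZeroDivisors A, ∀ m : M, a • m = 0 → m = 0

/-- The grade of an ideal `J`: the length of a maximal regular sequence contained in `J`. -/
noncomputable def Ideal.grade {A : Type*} [CommRing A] (J : Ideal A) : ℕ∞ :=
  sSup {n : ℕ∞ | ∃ rs : List A, (rs.length : ℕ∞) = n ∧ (∀ r ∈ rs, r ∈ J) ∧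
    RingTheory.Sequence.IsWeaklyRegular A rs}

/-- A Cohen–Macaulay local ring: Noetherian local with depth equal to Krull dimension. -/
def IsCohenMacaulayLocalRing (A : Type*) [CommRing A] : Prop :=
  IsNoetherianRing A ∧ ∃ _ : IsLocalRing A,
    ((IsLocalRing.maximalIdeal A).grade : WithBot ℕ∞) = ringKrullDim A

/-- A Cohen–Macaulay ring: Noetherian, all localizations at primes are CM local rings. -/
def IsCohenMacaulayRing (A : Type*) [CommRing A] : Prop :=
  IsNoetherianRing A ∧ ∀ (p : Ideal A) [p.IsPrime],
    IsCohenMacaulayLocalRing (Localization.AtPrime p)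

/-- A Gorenstein local ring: Noetherian local of finite self-injective dimension,
expressed via vanishing of `Ext^{n+1}(A/I, A)` for all ideals `I` (Baer's criterion). -/
def IsGorensteinLocalRing (A : Type u) [CommRing A] : Prop :=
  IsLocalRing A ∧ IsNoetherianRing A ∧
    ∃ n : ℕ, ∀ I : Ideal A, Subsingleton (ExtModule A (A ⧸ I) A (n + 1))

/-- A Gorenstein ring: Noetherian, all localizations at maximal ideals are Gorenstein local. -/
def IsGorensteinRing (A : Type u) [CommRing A] : Prop :=
  IsNoetherianRing A ∧ ∀ (m : Ideal A) [m.IsMaximal],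
    IsGorensteinLocalRing (Localization.AtPrime m)

/-- Generically Gorenstein: the localization at every associated prime is Gorenstein. -/
def IsGenericallyGorenstein (A : Type u) [CommRing A] : Prop :=
  ∀ (p : Ideal A) [p.IsPrime], p ∈ associatedPrimes A A →
    IsGorensteinLocalRing (Localization.AtPrime p)

/-- The trace ideal of a module: the sum of the images of all linear maps to the ring. -/
def traceIdeal (A : Type*) [CommRing A] (M : Type*) [AddCommGroup M] [Module A M] :
    Ideal A :=
  ⨆ f : M →ₗ[A] A, LinearMap.range f

/-- The image of an ideal inside the total ring of fractions. -/
noncomputable def Ideal.toFrac {A : Type u} [CommRing A] (I : Ideal A) :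
    Submodule A (FractionRing A) :=
  Submodule.map (Algebra.linearMap A (FractionRing A)) I

/-- The conductor `(R : S)` of a birational extension `R ⊆ S ⊆ Q(R)`,
as a submodule of the total ring of fractions. -/
noncomputable def conductorFrac (R : Type u) [CommRing R]
    (S : Subalgebra R (FractionRing R)) : Submodule R (FractionRing R) :=
  (1 : Submodule R (FractionRing R)) / Subalgebra.toSubmodule S

/-- `M ∈ Ω CM(A)`: there is an exact sequence `0 → M → P → N → 0` with `P` a finitely
generated projective `A`-module and `N` a finitely generated torsion-free
(equivalently, over a 1-dimensional CM ring, maximal Cohen–Macaulay) `A`-module. -/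
def InSyzygyOfCM (A : Type u) [CommRing A] (M : Type u) [AddCommGroup M] [Module A M] :
    Prop :=
  ∃ (P N : Type u) (_ : AddCommGroup P) (_ : Module A P) (_ : AddCommGroup N)
    (_ : Module A N), Module.Projective A P ∧ Module.Finite A P ∧ Module.Finite A N ∧
      IsTorsionFreeModule A N ∧
      ∃ (f : M →ₗ[A] P) (g : P →ₗ[A] N),
        Function.Injective f ∧ Function.Surjective g ∧ LinearMap.range f = LinearMap.ker g

section Comparison

variable {A : Type u} [CommRing A] (X Y : ModuleCat.{u} A) (n : ℕ)

theorem CategoryTheory.ProjectiveResolution.subsingleton_ext_iff {X : ModuleCat.{u} A}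
    (P : ProjectiveResolution X) :
    Subsingleton (Abelian.Ext X Y (n + 1)) ↔
      ∀ f : P.complex.X (n + 1) ⟶ Y, P.complex.d (n + 2) (n + 1) ≫ f = 0 →
        ∃ g : P.complex.X n ⟶ Y, P.complex.d (n + 1) n ≫ g = f := by
  refine ⟨fun h f hf ↦ ?_, fun h ↦ subsingleton_of_forall_eq 0 fun α ↦ ?_⟩
  · exact (P.extMk_eq_zero_iff f (n + 2) rfl hf n rfl).1 (Subsingleton.elim _ _)
  · obtain ⟨f, hf, rfl⟩ := P.extMk_surjective α (n + 2) rfl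
    exact (P.extMk_eq_zero_iff f (n + 2) rfl hf n rfl).2 (h f hf)

theorem CategoryTheory.ProjectiveResolution.subsingleton_leftDerivedExt_iff {X : ModuleCat.{u} A}
    (P : ProjectiveResolution X) :
    Subsingleton (((Ext A (ModuleCat.{u} A) (n + 1)).obj (Opposite.op X)).obj Y) ↔
      ∀ f : P.complex.X (n + 1) ⟶ Y, P.complex.d (n + 2) (n + 1) ≫ f = 0 →
        ∃ g : P.complex.X n ⟶ Y, P.complex.d (n + 1) n ≫ g = f := by
  rw [← ModuleCat.isZero_iff_subsingleton, (P.isoExt (R := A) (n + 1) Y).isZero_iff,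
    ← HomologicalComplex.exactAt_iff_isZero_homology,
    HomologicalComplex.exactAt_iff' _ n (n + 1) (n + 2) (by simp) (by simp),
    ShortComplex.moduleCat_exact_iff]
  rfl

theorem subsingleton_extModule_succ_iff :
    Subsingleton (ExtModule A X Y (n + 1)) ↔ Subsingleton (Abelian.Ext X Y (n + 1)) :=
  let P := ProjectiveResolution.of X
  (P.subsingleton_leftDerivedExt_iff Y n).trans (P.subsingleton_ext_iff Y n).symm

end Comparison

section LongExactSequence

variable {A : Type u} [CommRing A] {M₁ M₂ M₃ : Type u} [AddCommGroup M₁] [Module A M₁]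
  [AddCommGroup M₂] [Module A M₂] [AddCommGroup M₃] [Module A M₃]
  {f : M₁ →ₗ[A] M₂} {g : M₂ →ₗ[A] M₃}

theorem shortExact_mk_of_exact (hf : Function.Injective f) (hg : Function.Surjective g)
    (h : Function.Exact f g) :
    (ShortComplex.mk (ModuleCat.ofHom f) (ModuleCat.ofHom g)
      (ModuleCat.hom_ext h.linearMap_comp_eq_zero)).ShortExact where
  exact := (ShortComplex.ShortExact.moduleCat_exact_iff_function_exact _).2 h
  mono_f := (ModuleCat.mono_iff_injective _).2 hf
  epi_g := (ModuleCat.epi_iff_surjective _).2 hg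

variable (Y : ModuleCat.{u} A)

theorem subsingleton_ext_left_of_exact (hf : Function.Injective f) (hg : Function.Surjective g)
    (h : Function.Exact f g) (j : ℕ) (h₂ : Subsingleton (Abelian.Ext (ModuleCat.of A M₂) Y j))
    (h₃ : Subsingleton (Abelian.Ext (ModuleCat.of A M₃) Y (j + 1))) :
    Subsingleton (Abelian.Ext (ModuleCat.of A M₁) Y j) := by
  refine subsingleton_of_forall_eq 0 fun α ↦ ?_
  obtain ⟨β, rfl⟩ := Abelian.Ext.contravariant_sequence_exact₁ (shortExact_mk_of_exact hf hg h) Y α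
    (add_comm 1 j) (Subsingleton.elim (α := Abelian.Ext (ModuleCat.of A M₃) Y (j + 1)) _ _)
  rw [Subsingleton.elim (α := Abelian.Ext (ModuleCat.of A M₂) Y j) β 0, Abelian.Ext.comp_zero]

theorem subsingleton_ext_middle_of_exact (hf : Function.Injective f) (hg : Function.Surjective g)
    (h : Function.Exact f g) (j : ℕ) (h₁ : Subsingleton (Abelian.Ext (ModuleCat.of A M₁) Y j))
    (h₃ : Subsingleton (Abelian.Ext (ModuleCat.of A M₃) Y j)) :
    Subsingleton (Abelian.Ext (ModuleCat.of A M₂) Y j) := by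
  refine subsingleton_of_forall_eq 0 fun α ↦ ?_
  obtain ⟨β, rfl⟩ := Abelian.Ext.contravariant_sequence_exact₂ (shortExact_mk_of_exact hf hg h) Y α
    (Subsingleton.elim (α := Abelian.Ext (ModuleCat.of A M₁) Y j) _ _)
  rw [Subsingleton.elim (α := Abelian.Ext (ModuleCat.of A M₃) Y j) β 0, Abelian.Ext.comp_zero]

theorem subsingleton_ext_right_of_exact (hf : Function.Injective f) (hg : Function.Surjective g)
    (h : Function.Exact f g) (j : ℕ) (h₁ : Subsingleton (Abelian.Ext (ModuleCat.of A M₁) Y j))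
    (h₂ : Subsingleton (Abelian.Ext (ModuleCat.of A M₂) Y (j + 1))) :
    Subsingleton (Abelian.Ext (ModuleCat.of A M₃) Y (j + 1)) := by
  refine subsingleton_of_forall_eq 0 fun α ↦ ?_
  obtain ⟨β, rfl⟩ := Abelian.Ext.contravariant_sequence_exact₃ (shortExact_mk_of_exact hf hg h) Y α
    (Subsingleton.elim (α := Abelian.Ext (ModuleCat.of A M₂) Y (j + 1)) _ _) (add_comm 1 j)
  rw [Subsingleton.elim (α := Abelian.Ext (ModuleCat.of A M₁) Y j) β 0, Abelian.Ext.comp_zero]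

/-- Homomorphisms from `M₁` extend to `M₂` as soon as `Ext¹(M₃, Y)` vanishes. -/
theorem exists_extension_of_subsingleton_ext {N : Type u} [AddCommGroup N] [Module A N]
    (hf : Function.Injective f) (hg : Function.Surjective g) (h : Function.Exact f g)
    (h₃ : Subsingleton (Abelian.Ext (ModuleCat.of A M₃) (ModuleCat.of A N) 1)) (φ : M₁ →ₗ[A] N) :
    ∃ ψ : M₂ →ₗ[A] N, ψ ∘ₗ f = φ := by
  obtain ⟨β, hβ⟩ := Abelian.Ext.contravariant_sequence_exact₁ (shortExact_mk_of_exact hf hg h)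
    (ModuleCat.of A N) (Abelian.Ext.mk₀ (ModuleCat.ofHom φ)) (add_zero 1)
    (Subsingleton.elim (α := Abelian.Ext (ModuleCat.of A M₃) (ModuleCat.of A N) 1) _ _)
  obtain ⟨ψ, rfl⟩ := Abelian.Ext.addEquiv₀.symm.surjective β
  refine ⟨ψ.hom, ?_⟩
  rw [Abelian.Ext.addEquiv₀_symm_apply, Abelian.Ext.mk₀_comp_mk₀,
    (Abelian.Ext.mk₀_bijective _ _).injective.eq_iff] at hβ
  simpa using congrArg ModuleCat.Hom.hom hβ

/-- Homomorphisms to a quotient lift along the quotient map as soon as `Ext¹(M, M₁)` vanishes. -/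
theorem exists_lift_of_subsingleton_ext {M : Type u} [AddCommGroup M] [Module A M]
    (hf : Function.Injective f) (hg : Function.Surjective g) (h : Function.Exact f g)
    (h₁ : Subsingleton (Abelian.Ext (ModuleCat.of A M) (ModuleCat.of A M₁) 1)) (φ : M →ₗ[A] M₃) :
    ∃ ψ : M →ₗ[A] M₂, g ∘ₗ ψ = φ := by
  obtain ⟨β, hβ⟩ := Abelian.Ext.covariant_sequence_exact₃ (ModuleCat.of A M)
    (shortExact_mk_of_exact hf hg h) (Abelian.Ext.mk₀ (ModuleCat.ofHom φ)) (zero_add 1)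
    (Subsingleton.elim (α := Abelian.Ext (ModuleCat.of A M) (ModuleCat.of A M₁) 1) _ _)
  obtain ⟨ψ, rfl⟩ := Abelian.Ext.addEquiv₀.symm.surjective β
  refine ⟨ψ.hom, ?_⟩
  rw [Abelian.Ext.addEquiv₀_symm_apply, Abelian.Ext.mk₀_comp_mk₀,
    (Abelian.Ext.mk₀_bijective _ _).injective.eq_iff] at hβ
  simpa using congrArg ModuleCat.Hom.hom hβ

theorem subsingleton_ext_one_of_extension {N : Type u} [AddCommGroup N] [Module A N]
    [Module.Projective A M₂]
    (hf : Function.Injective f) (hg : Function.Surjective g) (h : Function.Exact f g)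
    (H : ∀ φ : M₁ →ₗ[A] N, ∃ ψ : M₂ →ₗ[A] N, ψ ∘ₗ f = φ) :
    Subsingleton (Abelian.Ext (ModuleCat.of A M₃) (ModuleCat.of A N) 1) := by
  refine subsingleton_of_forall_eq 0 fun α ↦ ?_
  have : Projective (ModuleCat.of A M₂) := (IsProjective.iff_projective _).1 inferInstance
  obtain ⟨β, rfl⟩ := Abelian.Ext.contravariant_sequence_exact₃ (shortExact_mk_of_exact hf hg h)
    (ModuleCat.of A N) α (Abelian.Ext.eq_zero_of_projective (n := 0) (P := ModuleCat.of A M₂) _)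
    (add_zero 1)
  obtain ⟨φ, rfl⟩ := Abelian.Ext.addEquiv₀.symm.surjective β
  obtain ⟨ψ, hψ⟩ := H φ.hom
  have : φ = ModuleCat.ofHom f ≫ ModuleCat.ofHom ψ := ModuleCat.hom_ext hψ.symm
  subst this
  rw [Abelian.Ext.addEquiv₀_symm_apply, ← Abelian.Ext.mk₀_comp_mk₀]
  exact (shortExact_mk_of_exact hf hg h).extClass_comp_assoc _

/-- If `y` is injective on `M` and `Ext^(j+1)(M / yM, Y)` vanishes, then `y` acts surjectively on
`Ext^j(M, Y)`; hence this module vanishes by Nakayama's lemma if `y` is in the Jacobson radical. -/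
theorem subsingleton_ext_of_quotient_smul [IsNoetherianRing A] {N : Type u} [AddCommGroup N]
    [Module A N] [Module.Finite A N] [Module.Finite A M₂] {y : A}
    (hy : y ∈ Ring.jacobson A) (hinj : Function.Injective (LinearMap.lsmul A M₂ y))
    (hg : Function.Surjective g) (h : Function.Exact (LinearMap.lsmul A M₂ y) g) (j : ℕ)
    (h₃ : Subsingleton (Abelian.Ext (ModuleCat.of A M₃) (ModuleCat.of A N) (j + 1))) :
    Subsingleton (Abelian.Ext (ModuleCat.of A M₂) (ModuleCat.of A N) j) := by
  have : Module.Finite A (ModuleCat.of A M₂) := ‹_›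
  have : Module.Finite A (ModuleCat.of A N) := ‹_›
  set E := Abelian.Ext (ModuleCat.of A M₂) (ModuleCat.of A N) j
  have key : (⊤ : Submodule A E) ≤ Ideal.span {y} • ⊤ := by
    intro α _
    obtain ⟨β, hβ⟩ := Abelian.Ext.contravariant_sequence_exact₁ (shortExact_mk_of_exact hinj hg h)
      (ModuleCat.of A N) α (add_comm 1 j)
      (Subsingleton.elim (α := Abelian.Ext (ModuleCat.of A M₃) (ModuleCat.of A N) (j + 1)) _ _)
    have e : ModuleCat.ofHom (LinearMap.lsmul A M₂ y) = y • 𝟙 (ModuleCat.of A M₂) := by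
      ext; simp
    have : α = y • β := by
      rw [← hβ]
      simp only [e]
      rw [Abelian.Ext.mk₀_smul, Abelian.Ext.smul_comp, Abelian.Ext.mk₀_id_comp]
    rw [this]
    exact Submodule.smul_mem_smul (Ideal.mem_span_singleton_self y) trivial
  have := Submodule.eq_bot_of_le_smul_of_le_jacobson_bot (Ideal.span {y}) (⊤ : Submodule A E)
    Module.Finite.fg_top key
    ((Ideal.span_singleton_le_iff_mem _).2 (by
      simpa [Ring.jacobson_eq_sInf_isMaximal, Ideal.jacobson] using hy))
  exact (Submodule.subsingleton_iff A).1 (subsingleton_of_bot_eq_top this.symm)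

end LongExactSequence

section CyclicModules

variable {A : Type u} [CommRing A]

theorem exists_exact_quotient_quotient (I J : Ideal A) (a : A) (hJ : ∀ b, b ∈ J ↔ a * b ∈ I) :
    ∃ (f : A ⧸ J →ₗ[A] A ⧸ I) (g : A ⧸ I →ₗ[A] A ⧸ (I ⊔ Ideal.span {a})),
      (∀ b, f (Submodule.Quotient.mk b) = Submodule.Quotient.mk (a * b)) ∧
      Function.Injective f ∧ Function.Surjective g ∧ Function.Exact f g := by
  refine ⟨Submodule.mapQ J I (LinearMap.lsmul A A a) fun b hb ↦ (hJ b).1 hb,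
    Submodule.factor le_sup_left, fun b ↦ rfl, ?_, Submodule.factor_surjective _, ?_⟩
  · rw [injective_iff_map_eq_zero]
    intro b hb
    obtain ⟨b, rfl⟩ := Submodule.Quotient.mk_surjective _ b
    rw [Submodule.Quotient.mk_eq_zero, hJ]
    exact (Submodule.Quotient.mk_eq_zero _).1 hb
  · intro b
    obtain ⟨b, rfl⟩ := Submodule.Quotient.mk_surjective _ b
    change Submodule.Quotient.mk b = 0 ↔ _
    rw [Submodule.Quotient.mk_eq_zero, Submodule.mem_sup]
    constructor
    · rintro ⟨i, hi, c, hc, rfl⟩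
      obtain ⟨d, rfl⟩ := Ideal.mem_span_singleton'.1 hc
      refine ⟨Submodule.Quotient.mk d, (Submodule.Quotient.eq _).2 ?_⟩
      have : a * d - (i + d * a) = -i := by ring
      simpa [this] using hi
    · rintro ⟨d, hd⟩
      obtain ⟨d, rfl⟩ := Submodule.Quotient.mk_surjective _ d
      have hd' : a * d - b ∈ I := (Submodule.Quotient.eq _).1 hd
      exact ⟨b - a * d, by simpa using I.neg_mem hd', d * a, Ideal.mem_span_singleton'.2 ⟨d, rfl⟩,
        by ring⟩

variable (A) in
/-- All modules `Ext^j(A / I, A)` vanish. -/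
def SelfExtVanishes (j : ℕ) : Prop :=
  ∀ I : Ideal A, Subsingleton (Abelian.Ext (ModuleCat.of A (A ⧸ I)) (ModuleCat.of A A) j)

theorem selfExtVanishes_of_succ [IsLocalRing A] [IsNoetherianRing A] {K : Ideal A} {z : A}
    (hz : z ∉ K) (hmz : ∀ a ∈ IsLocalRing.maximalIdeal A, z * a ∈ K) {j : ℕ}
    (hK : Subsingleton (Abelian.Ext (ModuleCat.of A (A ⧸ K)) (ModuleCat.of A A) j))
    (hj : SelfExtVanishes A (j + 1)) : SelfExtVanishes A j := by
  intro I
  induction I using IsNoetherian.induction with | hgt I ih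
  by_cases hI : I = ⊤
  · subst hI
    refine subsingleton_of_forall_eq 0 fun α ↦ ?_
    have : Limits.IsZero (ModuleCat.of A (A ⧸ (⊤ : Ideal A))) :=
      ModuleCat.isZero_of_subsingleton _
    rw [← Abelian.Ext.mk₀_id_comp α, this.eq_of_src (𝟙 _) 0, Abelian.Ext.mk₀_zero,
      Abelian.Ext.zero_comp]
  by_cases hm : I = IsLocalRing.maximalIdeal A
  · subst hm
    obtain ⟨f, g, -, hf, hg, h⟩ := exists_exact_quotient_quotient K (IsLocalRing.maximalIdeal A) z
      fun b ↦ ⟨hmz b, fun hb ↦ by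
        rw [IsLocalRing.mem_maximalIdeal]
        intro hu
        exact hz ((Ideal.mul_unit_mem_iff_mem _ hu).1 hb)⟩
    exact subsingleton_ext_left_of_exact _ hf hg h j hK (hj _)
  have hlt : I < IsLocalRing.maximalIdeal A :=
    lt_of_le_of_ne (IsLocalRing.le_maximalIdeal hI) hm
  by_cases hp : ∀ a ∉ I, ∀ b ∉ I, a * b ∉ I
  · obtain ⟨y, hym, hyI⟩ := SetLike.exists_of_lt hlt
    obtain ⟨f, g, hfa, hf, hg, h⟩ := exists_exact_quotient_quotient I I y
      fun b ↦ ⟨fun hb ↦ Ideal.mul_mem_left I _ hb, fun hb ↦ by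
        by_contra hbI
        exact hp y hyI b hbI hb⟩
    have e : f = LinearMap.lsmul A (A ⧸ I) y := by
      ext
      exact hfa 1
    subst e
    refine subsingleton_ext_of_quotient_smul ?_ hf hg h j (hj _)
    rw [IsLocalRing.ringJacobson_eq_maximalIdeal]
    exact hym
  · push Not at hp
    obtain ⟨a, ha, b, hb, hab⟩ := hp
    let J : Ideal A := Submodule.comap (LinearMap.lsmul A A a) I
    obtain ⟨f, g, -, hf, hg, h⟩ := exists_exact_quotient_quotient I J a fun b ↦ Iff.rfl
    refine subsingleton_ext_middle_of_exact _ hf hg h j (ih J ?_) (ih _ ?_)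
    · exact lt_of_le_of_ne (fun i hi ↦ Ideal.mul_mem_left I _ hi) fun e ↦ hb (e ▸ hab)
    · refine lt_of_le_of_ne le_sup_left fun e ↦ ha ?_
      rw [e]
      exact Ideal.mem_sup_right (Ideal.mem_span_singleton_self a)

theorem subsingleton_ext_of_projective (M Y : Type u) [AddCommGroup M] [Module A M]
    [AddCommGroup Y] [Module A Y] [Module.Projective A M] (j : ℕ) :
    Subsingleton (Abelian.Ext (ModuleCat.of A M) (ModuleCat.of A Y) (j + 1)) := by
  have : Projective (ModuleCat.of A M) := (IsProjective.iff_projective _).1 inferInstance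
  exact subsingleton_of_forall_eq 0 Abelian.Ext.eq_zero_of_projective

theorem subsingleton_ext_quotient_bot (Y : Type u) [AddCommGroup Y] [Module A Y] (j : ℕ) :
    Subsingleton (Abelian.Ext (ModuleCat.of A (A ⧸ (⊥ : Ideal A))) (ModuleCat.of A Y) (j + 1)) := by
  have := Module.Projective.of_equiv (Submodule.quotEquivOfEqBot (⊥ : Ideal A) rfl).symm
  exact subsingleton_ext_of_projective _ _ _

theorem exact_subtype_mkQ {M : Type u} [AddCommGroup M] [Module A M] (I : Submodule A M) :
    Function.Exact I.subtype I.mkQ := by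
  rw [LinearMap.exact_iff, Submodule.ker_mkQ, Submodule.range_subtype]

theorem subsingleton_ext_quotient_iff (I : Ideal A) (j : ℕ) :
    Subsingleton (Abelian.Ext (ModuleCat.of A (A ⧸ I)) (ModuleCat.of A A) (j + 2)) ↔
      Subsingleton (Abelian.Ext (ModuleCat.of A I) (ModuleCat.of A A) (j + 1)) :=
  ⟨subsingleton_ext_left_of_exact _ I.injective_subtype I.mkQ_surjective (exact_subtype_mkQ I)
      (j + 1) (subsingleton_ext_of_projective _ _ _),
    fun h ↦ subsingleton_ext_right_of_exact _ I.injective_subtype I.mkQ_surjective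
      (exact_subtype_mkQ I) (j + 1) h (subsingleton_ext_of_projective _ _ _)⟩

theorem exact_toSpanSingleton_mkQ (x : A) :
    Function.Exact (LinearMap.lsmul A A x) (Ideal.span {x}).mkQ := by
  rw [LinearMap.exact_iff, Submodule.ker_mkQ]
  ext b
  simp [Ideal.mem_span_singleton', mul_comm]

theorem lsmul_injective {x : A} (hx : x ∈ nonZeroDivisors A) :
    Function.Injective (LinearMap.lsmul A A x) := by
  rw [injective_iff_map_eq_zero]
  intro b hb
  exact (mem_nonZeroDivisors_iff.1 hx).1 b hb

theorem subsingleton_ext_quotient_span_singleton {x : A} (hx : x ∈ nonZeroDivisors A) (j : ℕ) :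
    Subsingleton (Abelian.Ext (ModuleCat.of A (A ⧸ Ideal.span {x})) (ModuleCat.of A A) (j + 2)) :=
  subsingleton_ext_right_of_exact _ (lsmul_injective hx) (Submodule.mkQ_surjective _)
    (exact_toSpanSingleton_mkQ x) (j + 1) (subsingleton_ext_of_projective _ _ _)
    (subsingleton_ext_of_projective _ _ _)

theorem IsGorensteinLocalRing.exists_selfExtVanishes (h : IsGorensteinLocalRing A) :
    ∃ n, SelfExtVanishes A (n + 1) := by
  obtain ⟨-, -, n, hn⟩ := h
  exact ⟨n, fun I ↦ (subsingleton_extModule_succ_iff _ _ n).1 (hn I)⟩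

theorem selfExtVanishes_one_of_mem_bot [IsLocalRing A] [IsNoetherianRing A] {z : A}
    (hz : z ≠ 0) (hmz : ∀ a ∈ IsLocalRing.maximalIdeal A, z * a = 0) :
    ∀ n, SelfExtVanishes A (n + 1) → SelfExtVanishes A 1
  | 0, h => h
  | n + 1, h => selfExtVanishes_one_of_mem_bot hz hmz n
      (selfExtVanishes_of_succ (K := ⊥) (by simpa) (by simpa)
        (subsingleton_ext_quotient_bot _ _) h)

theorem selfExtVanishes_two_of_mem_span [IsLocalRing A] [IsNoetherianRing A] {x z : A}
    (hx : x ∈ nonZeroDivisors A) (hz : z ∉ Ideal.span {x})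
    (hmz : ∀ a ∈ IsLocalRing.maximalIdeal A, z * a ∈ Ideal.span {x}) :
    ∀ n, SelfExtVanishes A (n + 1) → SelfExtVanishes A 2
  | 0, h => fun I ↦ (subsingleton_ext_quotient_iff I 0).2 <| by
      refine subsingleton_of_forall_eq 0 fun α ↦ ?_
      have : Injective (ModuleCat.of A A) := by
        have hB : Module.Baer A A := fun I φ ↦ by
          obtain ⟨ψ, hψ⟩ := exists_extension_of_subsingleton_ext I.injective_subtype
            I.mkQ_surjective (exact_subtype_mkQ I) (h I) φ
          exact ⟨ψ, fun b hb ↦ LinearMap.congr_fun hψ ⟨b, hb⟩⟩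
        have := hB.injective
        exact Module.injective_object_of_injective_module A A
      exact Abelian.Ext.eq_zero_of_injective _
  | 1, h => h
  | n + 2, h => selfExtVanishes_two_of_mem_span hx hz hmz (n + 1)
      (selfExtVanishes_of_succ hz hmz (subsingleton_ext_quotient_span_singleton hx n) h)

end CyclicModules

section DoubleColon

/-- All ideals `I` containing `x` satisfy `((x) : ((x) : I)) = I`. -/
def DoubleColonProperty {A : Type*} [CommRing A] (x : A) : Prop :=
  ∀ I : Ideal A, x ∈ I → ∀ j, (∀ c, (∀ i ∈ I, c * i ∈ Ideal.span {x}) → c * j ∈ Ideal.span {x}) →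
    j ∈ I

theorem SelfExtVanishes.doubleColonProperty {A : Type u} [CommRing A] [IsLocalRing A]
    (h : SelfExtVanishes A 2) {x z : A} (hx : x ∈ nonZeroDivisors A) (hz : z ∉ Ideal.span {x})
    (hmz : ∀ a ∈ IsLocalRing.maximalIdeal A, z * a ∈ Ideal.span {x}) :
    DoubleColonProperty x := by
  intro I hxI j hj
  by_contra hjI
  let J : Ideal A := Submodule.comap (LinearMap.lsmul A A j) I
  obtain ⟨f, g, hfa, hf, -, h'⟩ := exists_exact_quotient_quotient I J j fun b ↦ Iff.rfl
  have hJm : J ≤ LinearMap.ker ((Ideal.span {x}).mkQ ∘ₗ LinearMap.lsmul A A z) := by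
    have hJ : J ≠ ⊤ := fun e ↦ hjI <| by
      have : (1 : A) ∈ J := e ▸ trivial
      simpa [J] using this
    intro b hb
    rw [LinearMap.mem_ker]
    exact (Submodule.Quotient.mk_eq_zero _).2 (hmz b (IsLocalRing.le_maximalIdeal hJ hb))
  let K : Ideal A := I ⊔ Ideal.span {j}
  have hIK : I ≤ K := le_sup_left
  have hjK : j ∈ K := Ideal.mem_sup_right (Ideal.mem_span_singleton_self j)
  have hK : ∀ b : K, I.mkQ b ∈ LinearMap.range f := by
    rintro ⟨b, hb⟩
    obtain ⟨i, hi, c, hc, rfl⟩ := Submodule.mem_sup.1 hb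
    obtain ⟨d, rfl⟩ := Ideal.mem_span_singleton'.1 hc
    refine ⟨Submodule.Quotient.mk d, ?_⟩
    rw [hfa]
    refine (Submodule.Quotient.eq _).2 ?_
    have : j * d - (i + d * j) = -i := by ring
    simpa [this] using hi
  let φ : K →ₗ[A] A ⧸ Ideal.span {x} := (J.liftQ _ hJm ∘ₗ
    (LinearEquiv.ofInjective f hf).symm.toLinearMap) ∘ₗ
      LinearMap.codRestrict _ (I.mkQ ∘ₗ K.subtype) hK
  have hφI : ∀ i (hi : i ∈ I), φ ⟨i, hIK hi⟩ = 0 := by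
    intro i hi
    have : LinearMap.codRestrict _ (I.mkQ ∘ₗ K.subtype) hK ⟨i, hIK hi⟩ = 0 :=
      Subtype.ext ((Submodule.Quotient.mk_eq_zero I).2 hi)
    simp only [φ, LinearMap.comp_apply, this, map_zero]
  have hφj : φ ⟨j, hjK⟩ = Submodule.Quotient.mk z := by
    have : LinearMap.codRestrict _ (I.mkQ ∘ₗ K.subtype) hK ⟨j, hjK⟩ =
        LinearEquiv.ofInjective f hf (Submodule.Quotient.mk 1) := by
      refine Subtype.ext ?_
      change (Submodule.Quotient.mk j : A ⧸ I) = f (Submodule.Quotient.mk 1)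
      rw [hfa, mul_one]
    simp only [φ, LinearMap.comp_apply, this, LinearEquiv.coe_coe, LinearEquiv.symm_apply_apply]
    change (Submodule.Quotient.mk (z * 1) : A ⧸ Ideal.span {x}) = _
    rw [mul_one]
  obtain ⟨ψ, hψ⟩ := exists_lift_of_subsingleton_ext (lsmul_injective hx)
    (Submodule.mkQ_surjective _) (exact_toSpanSingleton_mkQ x)
    ((subsingleton_ext_quotient_iff K 0).1 (h K)) φ
  have hψ' : ∀ k, (Submodule.Quotient.mk (ψ k) : A ⧸ Ideal.span {x}) = φ k :=
    fun k ↦ LinearMap.congr_fun hψ k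
  obtain ⟨c, hc⟩ : ∃ c, c * x = ψ ⟨x, hIK hxI⟩ := by
    rw [← Ideal.mem_span_singleton', ← Submodule.Quotient.mk_eq_zero, hψ', hφI x hxI]
  have hψc : ∀ k : K, ψ k = c * k := by
    intro k
    have e : x • k = (k : A) • (⟨x, hIK hxI⟩ : K) := Subtype.ext (mul_comm _ _)
    have := congrArg ψ e
    rw [map_smul, map_smul, ← hc, smul_eq_mul, smul_eq_mul] at this
    refine lsmul_injective hx ?_
    simp only [LinearMap.lsmul_apply, smul_eq_mul, this]
    ring
  refine hz ((Submodule.Quotient.mk_eq_zero _).1 ?_)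
  rw [← hφj, ← hψ', hψc, Submodule.Quotient.mk_eq_zero]
  refine hj c fun i hi ↦ ?_
  rw [← Submodule.Quotient.mk_eq_zero, ← hφI i hi, ← hψ', hψc]

theorem baer_of_forall_annihilator {B : Type*} [CommRing B] [IsNoetherianRing B]
    (H : ∀ (I : Ideal B) (j : B), (∀ c, (∀ i ∈ I, c * i = 0) → c * j = 0) → j ∈ I) :
    Module.Baer B B := by
  suffices ∀ (I : Ideal B) (φ : I →ₗ[B] B), ∃ c, ∀ i : I, φ i = c * i from fun I φ ↦
    (this I φ).imp' (LinearMap.lsmul B B) fun c hc b hb ↦ (hc ⟨b, hb⟩).symm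
  intro I
  induction I, IsNoetherian.noetherian I using Submodule.fg_induction with
  | singleton a =>
    intro φ
    have ha : a ∈ Submodule.span B {a} := Submodule.mem_span_singleton_self a
    obtain ⟨c, hc⟩ : ∃ c, c * a = φ ⟨a, ha⟩ := by
      refine Ideal.mem_span_singleton'.1 (H _ _ fun d hd ↦ ?_)
      rw [← smul_eq_mul, ← map_smul]
      convert map_zero φ
      exact Subtype.ext (hd a ha)
    refine ⟨c, fun ⟨i, hi⟩ ↦ ?_⟩
    obtain ⟨d, rfl⟩ := Submodule.mem_span_singleton.1 hi
    have : (⟨d • a, hi⟩ : Submodule.span B {a}) = d • ⟨a, ha⟩ := rfl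
    rw [this, map_smul, ← hc]
    change d * (c * a) = c * (d * a)
    ring
  | sup I₁ I₂ _ _ ih₁ ih₂ =>
    intro φ
    obtain ⟨c₁, hc₁⟩ := ih₁ (φ ∘ₗ Submodule.inclusion le_sup_left)
    obtain ⟨c₂, hc₂⟩ := ih₂ (φ ∘ₗ Submodule.inclusion le_sup_right)
    have hmem : c₁ - c₂ ∈ Module.annihilator B I₁ ⊔ Module.annihilator B I₂ := by
      refine H _ _ fun c hc ↦ ?_
      have h₁ : c ∈ I₁ := H _ _ fun d hd ↦ by
        rw [mul_comm]
        exact hc d (Ideal.mem_sup_left (Submodule.mem_annihilator.2 hd))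
      have h₂ : c ∈ I₂ := H _ _ fun d hd ↦ by
        rw [mul_comm]
        exact hc d (Ideal.mem_sup_right (Submodule.mem_annihilator.2 hd))
      have e : c₁ * c = c₂ * c := (hc₁ ⟨c, h₁⟩).symm.trans (hc₂ ⟨c, h₂⟩)
      linear_combination e
    obtain ⟨u, hu, v, hv, huv⟩ := Submodule.mem_sup.1 hmem
    refine ⟨c₁ - u, fun ⟨k, hk⟩ ↦ ?_⟩
    obtain ⟨a, ha, b, hb, rfl⟩ := Submodule.mem_sup.1 hk
    have : φ ⟨a + b, hk⟩ = c₁ * a + c₂ * b := by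
      rw [← hc₁ ⟨a, ha⟩, ← hc₂ ⟨b, hb⟩]
      exact map_add φ ⟨a, Ideal.mem_sup_left ha⟩ ⟨b, Ideal.mem_sup_right hb⟩
    have hu' : u * a = 0 := Submodule.mem_annihilator.1 hu a ha
    have hv' : v * b = 0 := Submodule.mem_annihilator.1 hv b hb
    rw [this]
    linear_combination hu' - hv' + b * huv

theorem DoubleColonProperty.injective_quotient {A : Type u} [CommRing A] [IsNoetherianRing A]
    {x : A} (h : DoubleColonProperty x) :
    Module.Injective (A ⧸ Ideal.span {x}) (A ⧸ Ideal.span {x}) := by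
  refine (baer_of_forall_annihilator fun I j hj ↦ ?_).injective
  obtain ⟨j, rfl⟩ := Ideal.Quotient.mk_surjective j
  refine h (I.comap (Ideal.Quotient.mk _)) ?_ j fun c hc ↦ ?_
  · rw [Ideal.mem_comap, Ideal.Quotient.eq_zero_iff_mem.2 (Ideal.mem_span_singleton_self x)]
    exact I.zero_mem
  · rw [← Ideal.Quotient.eq_zero_iff_mem, map_mul]
    refine hj _ fun i hi ↦ ?_
    obtain ⟨i, rfl⟩ := Ideal.Quotient.mk_surjective i
    rw [← map_mul, Ideal.Quotient.eq_zero_iff_mem]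
    exact hc i hi

theorem exists_extension_of_injective_quotient {A : Type u} [CommRing A] {J : Ideal A}
    (hB : Module.Injective (A ⧸ J) (A ⧸ J)) {F : Type u} [AddCommGroup F] [Module A F]
    (K : Submodule A F) (hK : ∀ k ∈ K, k ∈ J • (⊤ : Submodule A F) → k ∈ J • K)
    (φ : K →ₗ[A] A ⧸ J) : ∃ ψ : F →ₗ[A] A ⧸ J, ∀ k : K, ψ k = φ k := by
  let f₀ : (K ⧸ J • (⊤ : Submodule A K)) →ₗ[A] (F ⧸ J • (⊤ : Submodule A F)) :=
    Submodule.mapQ _ _ K.subtype (Submodule.map_le_iff_le_comap.1 (by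
      rw [Submodule.map_smul'']
      exact Submodule.smul_mono le_rfl le_top))
  have hsurj : Function.Surjective (algebraMap A (A ⧸ J)) := Ideal.Quotient.mk_surjective
  let f := f₀.extendScalarsOfSurjective hsurj
  have hf : Function.Injective f := by
    rw [injective_iff_map_eq_zero]
    intro k hk
    obtain ⟨⟨k, hkK⟩, rfl⟩ := Submodule.Quotient.mk_surjective _ k
    rw [Submodule.Quotient.mk_eq_zero]
    have := hK k hkK ((Submodule.Quotient.mk_eq_zero _).1 hk)
    rw [← Submodule.range_subtype K, ← Submodule.map_top, ← Submodule.map_smul''] at this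
    obtain ⟨k', hk', rfl⟩ := this
    exact hk'
  let g₀ : (K ⧸ J • (⊤ : Submodule A K)) →ₗ[A] A ⧸ J :=
    Submodule.liftQ _ φ (Submodule.smul_le.2 fun a ha k _ ↦ by
      rw [LinearMap.mem_ker, map_smul]
      obtain ⟨b, hb⟩ := Ideal.Quotient.mk_surjective (φ k)
      rw [← hb, Algebra.smul_def, Ideal.Quotient.algebraMap_eq, ← map_mul,
        Ideal.Quotient.eq_zero_iff_mem]
      exact J.mul_mem_right _ ha)
  obtain ⟨h, hh⟩ := hB.out f hf (g₀.extendScalarsOfSurjective hsurj)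
  exact ⟨h.restrictScalars A ∘ₗ Submodule.mkQ _, fun k ↦ hh (Submodule.Quotient.mk k)⟩

theorem DoubleColonProperty.selfExtVanishes {A : Type u} [CommRing A] [IsNoetherianRing A]
    {x : A} (h : DoubleColonProperty x) (hx : x ∈ nonZeroDivisors A) (hxj : x ∈ Ring.jacobson A) :
    SelfExtVanishes A 2 := by
  intro I
  rw [subsingleton_ext_quotient_iff]
  obtain ⟨n, g, hg⟩ := Module.Finite.exists_fin' A I
  let F := Fin n → A
  let K : Submodule A F := LinearMap.ker g
  refine subsingleton_ext_one_of_extension K.injective_subtype hg (by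
    rw [LinearMap.exact_iff, Submodule.range_subtype]) fun φ ↦ ?_
  let res : (F →ₗ[A] A) →ₗ[A] (K →ₗ[A] A) := LinearMap.lcomp A A K.subtype
  have hK : ∀ k ∈ K, k ∈ Ideal.span {x} • (⊤ : Submodule A F) → k ∈ Ideal.span {x} • K := by
    intro k hk hkx
    rw [Submodule.ideal_span_singleton_smul] at hkx ⊢
    obtain ⟨k', -, rfl⟩ := hkx
    refine ⟨k', ?_, rfl⟩
    rw [SetLike.mem_coe, LinearMap.mem_ker]
    have hk' : g (x • k') = 0 := hk
    rw [map_smul] at hk'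
    exact Subtype.ext (lsmul_injective hx (by simpa using congrArg Subtype.val hk'))
  suffices hres : (⊤ : Submodule A (K →ₗ[A] A)) ≤ LinearMap.range res from
    (hres (Submodule.mem_top (x := φ))).imp fun ψ hψ ↦ hψ
  refine Submodule.le_of_le_smul_of_le_jacobson_bot (I := Ideal.span {x}) Module.Finite.fg_top
    ((Ideal.span_singleton_le_iff_mem _).2 (by
      simpa [Ring.jacobson_eq_sInf_isMaximal, Ideal.jacobson] using hxj)) fun φ _ ↦ ?_
  obtain ⟨ψ, hψ⟩ := exists_extension_of_injective_quotient h.injective_quotient K hK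
    ((Ideal.span {x}).mkQ ∘ₗ φ)
  obtain ⟨ψ', hψ'⟩ := Module.projective_lifting_property (Ideal.span {x}).mkQ ψ
    (Submodule.mkQ_surjective _)
  have hdiff : ∀ k : K, φ k - ψ' k ∈ LinearMap.range (LinearMap.lsmul A A x) := by
    intro k
    have : φ k - ψ' k ∈ Ideal.span {x} := by
      rw [← Submodule.Quotient.eq]
      exact (hψ k).symm.trans (LinearMap.congr_fun hψ' k).symm
    obtain ⟨c, hc⟩ := Ideal.mem_span_singleton'.1 this
    exact ⟨c, (mul_comm _ _).trans hc⟩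
  let θ : K →ₗ[A] A := (LinearEquiv.ofInjective _ (lsmul_injective hx)).symm.toLinearMap ∘ₗ
    LinearMap.codRestrict _ (φ - res ψ') hdiff
  have hθ : φ = res ψ' + x • θ := by
    ext k
    have := congrArg Subtype.val ((LinearEquiv.ofInjective _ (lsmul_injective hx)).apply_symm_apply
      (LinearMap.codRestrict _ (φ - res ψ') hdiff k))
    have e : x * θ k = φ k - ψ' k := this
    simp [res, e]
  rw [hθ]
  exact Submodule.add_mem_sup ⟨ψ', rfl⟩
    (Submodule.smul_mem_smul (Ideal.mem_span_singleton_self x) trivial)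

end DoubleColon

section LocalRings

theorem exists_mul_mem_span_of_forall_prime {A : Type*} [CommRing A] [IsLocalRing A]
    [IsNoetherianRing A] {x : A} (hxm : x ∈ IsLocalRing.maximalIdeal A)
    (hprime : ∀ p : Ideal A, p.IsPrime → x ∈ p → p.IsMaximal) :
    ∃ z ∉ Ideal.span {x}, ∀ a ∈ IsLocalRing.maximalIdeal A, z * a ∈ Ideal.span {x} := by
  have hx : Ideal.span {x} ≠ ⊤ := by
    rw [Ne, Ideal.span_singleton_eq_top]
    exact (IsLocalRing.mem_maximalIdeal x).1 hxm
  have := Ideal.Quotient.nontrivial_iff.2 hx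
  obtain ⟨p, hp⟩ := associatedPrimes.nonempty A (A ⧸ Ideal.span {x})
  obtain ⟨hpp, z, hz⟩ := isAssociatedPrime_iff.1 ((AssociatedPrimes.mem_iff).1 hp)
  obtain ⟨z, rfl⟩ := Ideal.Quotient.mk_surjective z
  have hmem : ∀ a, a ∈ p ↔ z * a ∈ Ideal.span {x} := fun a ↦ by
    rw [hz, Submodule.mem_colon_singleton, Submodule.mem_bot, mul_comm,
      ← Ideal.Quotient.eq_zero_iff_mem]
    rfl
  have hxp : x ∈ p := (hmem x).2 (Ideal.mul_mem_left _ _ (Ideal.mem_span_singleton_self x))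
  refine ⟨z, fun hzx ↦ hpp.one_notMem ((hmem 1).2 (by rwa [mul_one])), fun a ha ↦ ?_⟩
  rwa [← hmem, IsLocalRing.eq_maximalIdeal (hprime p hpp hxp)]

theorem IsGorensteinLocalRing.doubleColonProperty {A : Type u} [CommRing A]
    (h : IsGorensteinLocalRing A) {x : A} (hx : x ∈ nonZeroDivisors A)
    (hprime : ∀ p : Ideal A, p.IsPrime → x ∈ p → p.IsMaximal) : DoubleColonProperty x := by
  by_cases hu : IsUnit x
  · intro I hI j _
    rw [I.eq_top_of_isUnit_mem hI hu]
    trivial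
  have := h.1
  have := h.2.1
  obtain ⟨z, hz, hmz⟩ := exists_mul_mem_span_of_forall_prime
    ((IsLocalRing.mem_maximalIdeal x).2 hu) hprime
  obtain ⟨n, hn⟩ := h.exists_selfExtVanishes
  exact (selfExtVanishes_two_of_mem_span hx hz hmz n hn).doubleColonProperty hx hz hmz

theorem DoubleColonProperty.isGorensteinLocalRing {A : Type u} [CommRing A] [IsLocalRing A]
    [IsNoetherianRing A] {x : A} (h : DoubleColonProperty x) (hx : x ∈ nonZeroDivisors A)
    (hxm : x ∈ IsLocalRing.maximalIdeal A) : IsGorensteinLocalRing A :=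
  ⟨inferInstance, inferInstance, 1, fun I ↦ (subsingleton_extModule_succ_iff _ _ 1).2
    (h.selfExtVanishes hx (by rwa [IsLocalRing.ringJacobson_eq_maximalIdeal]) I)⟩

theorem IsGorensteinLocalRing.exists_mem_nonZeroDivisors {A : Type u} [CommRing A] [IsLocalRing A]
    (h : IsGorensteinLocalRing A) (hdim : ¬ Ring.KrullDimLE 0 A) :
    ∃ x ∈ nonZeroDivisors A, x ∈ IsLocalRing.maximalIdeal A := by
  have := h.2.1
  by_contra! hx
  obtain ⟨z, hz, hz0⟩ := SetLike.exists_of_lt (Ideal.bot_lt_annihilator_of_disjoint_nonZeroDivisors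
    (Set.disjoint_right.2 fun x hx' ↦ hx x hx'))
  obtain ⟨n, hn⟩ := h.exists_selfExtVanishes
  have h₁ := selfExtVanishes_one_of_mem_bot hz0
    (fun a ha ↦ (Submodule.mem_annihilator.1 hz a ha : z • a = 0)) n hn
  rw [Ring.krullDimLE_zero_iff] at hdim
  push Not at hdim
  obtain ⟨q, hqp, hq⟩ := hdim
  obtain ⟨p, hp, hpq⟩ := Ideal.exists_minimalPrimes_le (bot_le : ⊥ ≤ q)
  have hpm : p ≠ IsLocalRing.maximalIdeal A := by
    rintro rfl
    have : q = IsLocalRing.maximalIdeal A :=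
      le_antisymm (IsLocalRing.le_maximalIdeal hqp.ne_top) hpq
    exact hq (this ▸ inferInstance)
  have hass : p ∈ associatedPrimes A A := by
    refine Module.associatedPrimes.minimalPrimes_annihilator_subset_associatedPrimes A A ?_
    rwa [(Module.annihilator_eq_bot (R := A) (M := A)).2 inferInstance]
  obtain ⟨hpp, w, hw⟩ := isAssociatedPrime_iff.1 ((AssociatedPrimes.mem_iff).1 hass)
  have hmem : ∀ a, a ∈ p ↔ a * w = 0 := fun a ↦ by
    rw [hw, Submodule.mem_colon_singleton, Submodule.mem_bot, smul_eq_mul]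
  obtain ⟨y, hym, hyp⟩ := SetLike.exists_of_lt
    (lt_of_le_of_ne (IsLocalRing.le_maximalIdeal hpp.ne_top) hpm)
  obtain ⟨f, g, hfa, hf, hg, hfg⟩ := exists_exact_quotient_quotient ⊥ p (y * w) fun b ↦ by
    rw [Submodule.mem_bot, mul_right_comm, ← hmem]
    exact ⟨fun hb ↦ p.mul_mem_left _ hb, fun hb ↦ (hpp.mem_or_mem hb).resolve_left hyp⟩
  obtain ⟨ψ, hψ⟩ := exists_extension_of_subsingleton_ext hf hg hfg (h₁ _)
    (p.liftQ (LinearMap.toSpanSingleton A A w) fun b hb ↦ (hmem b).1 hb)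
  have e₁ : ψ (f (Submodule.Quotient.mk 1)) = 1 * w := LinearMap.congr_fun hψ _
  have e₂ : (Submodule.Quotient.mk (y * w * 1) : A ⧸ (⊥ : Ideal A)) =
      (y * w) • Submodule.Quotient.mk 1 := by
    rw [← Submodule.Quotient.mk_smul, smul_eq_mul]
  rw [hfa, e₂, map_smul, smul_eq_mul] at e₁
  set c := ψ (Submodule.Quotient.mk 1)
  have hu : IsUnit (1 - y * c) := by
    by_contra hu
    have := Ideal.add_mem _ ((IsLocalRing.mem_maximalIdeal _).2 hu)
      (Ideal.mul_mem_right c _ hym)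
    rw [sub_add_cancel] at this
    exact (Ideal.ne_top_iff_one _).1 (IsLocalRing.maximalIdeal.isMaximal A).ne_top this
  have hw0 : w = 0 := hu.mul_right_eq_zero.1 (by linear_combination -e₁)
  exact hpp.one_notMem ((hmem 1).2 (by rw [hw0, mul_zero]))

theorem isMaximal_of_mem_nonZeroDivisors {A : Type*} [CommRing A] [Ring.KrullDimLE 1 A] {x : A}
    (hx : x ∈ nonZeroDivisors A) (p : Ideal A) (hp : p.IsPrime) (hxp : x ∈ p) : p.IsMaximal :=
  (Ring.krullDimLE_one_iff.1 inferInstance p hp).resolve_left fun h ↦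
    Set.disjoint_left.1 (Ideal.disjoint_nonZeroDivisors_of_mem_minimalPrimes h) hxp hx

end LocalRings

section Localization

variable {A L : Type*} [CommRing A] [IsNoetherianRing A] [CommRing L] [Algebra A L]

theorem exists_forall_mul_mem_of_forall_mem_map (M : Submonoid A) [IsLocalization M L] (J : Ideal A)
    (I : Ideal A) (h : ∀ i ∈ I, algebraMap A L i ∈ J.map (algebraMap A L)) :
    ∃ t ∈ M, ∀ i ∈ I, t * i ∈ J := by
  induction I, IsNoetherian.noetherian I using Submodule.fg_induction with
  | singleton a =>
    obtain ⟨t, ht, hta⟩ := (IsLocalization.algebraMap_mem_map_algebraMap_iff M L J a).1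
      (h a (Submodule.mem_span_singleton_self a))
    refine ⟨t, ht, fun i hi ↦ ?_⟩
    obtain ⟨b, rfl⟩ := Submodule.mem_span_singleton.1 hi
    rw [smul_eq_mul, mul_left_comm]
    exact J.mul_mem_left b hta
  | sup I₁ I₂ _ _ ih₁ ih₂ =>
    obtain ⟨t₁, ht₁, h₁⟩ := ih₁ fun i hi ↦ h i (Ideal.mem_sup_left hi)
    obtain ⟨t₂, ht₂, h₂⟩ := ih₂ fun i hi ↦ h i (Ideal.mem_sup_right hi)
    refine ⟨t₁ * t₂, M.mul_mem ht₁ ht₂, fun i hi ↦ ?_⟩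
    obtain ⟨a, ha, b, hb, rfl⟩ := Submodule.mem_sup.1 hi
    have : t₁ * t₂ * (a + b) = t₂ * (t₁ * a) + t₁ * (t₂ * b) := by ring
    rw [this]
    exact J.add_mem (J.mul_mem_left _ (h₁ a ha)) (J.mul_mem_left _ (h₂ b hb))

theorem DoubleColonProperty.of_localization_maximal {x : A}
    (h : ∀ (n : Ideal A) [n.IsMaximal],
      DoubleColonProperty (algebraMap A (Localization.AtPrime n) x)) :
    DoubleColonProperty x := by
  intro I hI j hj
  by_contra hjI
  let K : Ideal A := Submodule.comap (LinearMap.lsmul A A j) I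
  have hK : K ≠ ⊤ := fun e ↦ hjI <| by
    have : (1 : A) ∈ K := e ▸ trivial
    simpa [K] using this
  obtain ⟨n, hn, hKn⟩ := Ideal.exists_le_maximal K hK
  have hmap : Ideal.span {algebraMap A (Localization.AtPrime n) x} =
      (Ideal.span {x}).map (algebraMap A (Localization.AtPrime n)) := by
    rw [Ideal.map_span, Set.image_singleton]
  have := h n (I.map _) (Ideal.mem_map_of_mem _ hI) (algebraMap A _ j) fun c hc ↦ by
    obtain ⟨a, s, rfl⟩ := IsLocalization.exists_mk'_eq n.primeCompl c
    rw [hmap] at hc ⊢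
    obtain ⟨t, ht, hta⟩ := exists_forall_mul_mem_of_forall_mem_map n.primeCompl (Ideal.span {x})
        (L := Localization.AtPrime n) (Ideal.span {a} * I) fun k hk ↦ by
      obtain ⟨i, hi, rfl⟩ := Ideal.mem_span_singleton_mul.1 hk
      have := Ideal.mul_mem_left _ (algebraMap A _ s) (hc _ (Ideal.mem_map_of_mem _ hi))
      rwa [← mul_assoc, IsLocalization.mk'_spec', ← map_mul] at this
    have hmem : t * a * j ∈ Ideal.span {x} := hj _ fun i hi ↦ by
      rw [mul_assoc]
      exact hta _ (Ideal.mul_mem_mul (Ideal.mem_span_singleton_self a) hi)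
    rw [← IsLocalization.mk'_one (M := n.primeCompl) (Localization.AtPrime n) j,
      ← IsLocalization.mk'_mul, IsLocalization.mk'_mem_map_algebraMap_iff]
    exact ⟨t, ht, by rwa [← mul_assoc]⟩
  obtain ⟨t, ht, htj⟩ := (IsLocalization.algebraMap_mem_map_algebraMap_iff n.primeCompl _ I j).1 this
  exact ht (hKn (by simpa [K, mul_comm] using htj))

theorem DoubleColonProperty.localization (M : Submonoid A) [IsLocalization M L] {x : A}
    (h : DoubleColonProperty x) : DoubleColonProperty (algebraMap A L x) := by
  intro I hI j hj
  obtain ⟨j, s, rfl⟩ := IsLocalization.exists_mk'_eq M j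
  have hmap : Ideal.span {algebraMap A L x} = (Ideal.span {x}).map (algebraMap A L) := by
    rw [Ideal.map_span, Set.image_singleton]
  let K : Ideal A := (Ideal.span {x}).colon (I.comap (algebraMap A L))
  have hK : ∀ c, c ∈ K ↔ ∀ i, algebraMap A L i ∈ I → c * i ∈ Ideal.span {x} := fun c ↦
    Submodule.mem_colon
  obtain ⟨t, ht, htj⟩ := exists_forall_mul_mem_of_forall_mem_map (L := L) M (Ideal.span {x})
      (Ideal.span {j} * K) fun k hk ↦ by
    obtain ⟨c, hc, rfl⟩ := Ideal.mem_span_singleton_mul.1 hk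
    have := hj (algebraMap A L c) fun i hi ↦ by
      obtain ⟨i, s, rfl⟩ := IsLocalization.exists_mk'_eq M i
      have hi' := Ideal.mul_mem_left _ (algebraMap A L s) hi
      rw [IsLocalization.mk'_spec'] at hi'
      rw [hmap, ← IsLocalization.mk'_one (M := M) L c, ← IsLocalization.mk'_mul,
        IsLocalization.mk'_mem_map_algebraMap_iff]
      exact ⟨1, M.one_mem, by simpa using (hK c).1 hc i hi'⟩
    have := Ideal.mul_mem_left _ (algebraMap A L s) this
    rwa [mul_left_comm, IsLocalization.mk'_spec', ← map_mul, mul_comm, hmap] at this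
  have := h (I.comap (algebraMap A L)) hI (t * j) fun c hc ↦ by
    have := htj (j * c) (Ideal.mul_mem_mul (Ideal.mem_span_singleton_self j) ((hK c).2 hc))
    rwa [show c * (t * j) = t * (j * c) by ring]
  rw [Ideal.mem_comap, map_mul,
    Ideal.unit_mul_mem_iff_mem _ (IsLocalization.map_units L ⟨t, ht⟩)] at this
  rw [IsLocalization.mk'_eq_mul_mk'_one]
  exact Ideal.mul_mem_right _ _ this

end Localization

section FractionRing

theorem one_div_one_div_le {A Q : Type*} [CommRing A] [CommRing Q] [Algebra A Q] {M : Submonoid A}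
    [IsLocalization M Q] (hM : M ≤ nonZeroDivisors A) (hA : ∀ x ∈ M, DoubleColonProperty x)
    {N : Submodule A Q} {r x : A} (hr : r ∈ M) (hrN : algebraMap A Q r ∈ 1 / N) (hx : x ∈ M)
    (hxN : algebraMap A Q x ∈ N) : 1 / (1 / N) ≤ N := by
  intro y hy
  rw [Submodule.mem_div_iff_forall_mul_mem] at hy hrN
  have hinj := IsLocalization.injective Q hM
  have hru := IsLocalization.map_units Q ⟨r, hr⟩
  have hxu := IsLocalization.map_units Q ⟨x, hx⟩
  obtain ⟨j, hj⟩ := Submodule.mem_one.1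
    (hy (algebraMap A Q r) (Submodule.mem_div_iff_forall_mul_mem.2 hrN))
  let I : Ideal A := (N.map (LinearMap.lsmul A Q r)).comap (Algebra.linearMap A Q)
  have hI : ∀ i, i ∈ I ↔ ∃ n ∈ N, algebraMap A Q r * n = algebraMap A Q i := fun i ↦ by
    simp [I, Algebra.smul_def]
  obtain ⟨n, hn, hnj⟩ := (hI j).1 <| hA (r * x) (M.mul_mem hr hx) I
      ((hI _).2 ⟨_, hxN, (map_mul _ _ _).symm⟩) j fun c hc ↦ by
    have hq : IsLocalization.mk' Q c ⟨x, hx⟩ ∈ 1 / N := by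
      refine Submodule.mem_div_iff_forall_mul_mem.2 fun n hn ↦ ?_
      obtain ⟨i, hi⟩ := Submodule.mem_one.1 (hrN n hn)
      obtain ⟨d, hd⟩ := Ideal.mem_span_singleton'.1 (hc i ((hI i).2 ⟨n, hn, hi.symm⟩))
      refine Submodule.mem_one.2 ⟨d, (hru.mul hxu).mul_left_cancel ?_⟩
      have h₁ := IsLocalization.mk'_spec' Q c (⟨x, hx⟩ : M)
      have h₂ := congrArg (algebraMap A Q) hd
      simp only [map_mul] at h₁ h₂ ⊢
      linear_combination h₂ + algebraMap A Q c * hi - algebraMap A Q r * n * h₁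
    obtain ⟨d, hd⟩ := Submodule.mem_one.1 (hy _ hq)
    refine Ideal.mem_span_singleton'.2 ⟨d, hinj ?_⟩
    have h₁ := IsLocalization.mk'_spec' Q c (⟨x, hx⟩ : M)
    simp only [map_mul] at h₁ ⊢
    linear_combination algebraMap A Q r * algebraMap A Q x * hd + algebraMap A Q r * y * h₁ -
      algebraMap A Q c * hj
  rw [hj, mul_comm y] at hnj
  rwa [← hru.mul_left_cancel hnj]

theorem apply_mul_comm_of_isLocalization {A Q : Type*} [CommRing A] [CommRing Q] [Algebra A Q]
    (M : Submonoid A) [IsLocalization M Q] {N : Submodule A Q} (φ : N →ₗ[A] Q) (n n' : N) :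
    φ n * n' = φ n' * n := by
  obtain ⟨⟨a, s⟩, hs⟩ := IsLocalization.surj M (n : Q)
  obtain ⟨⟨a', s'⟩, hs'⟩ := IsLocalization.surj M (n' : Q)
  dsimp only at hs hs'
  have h : (a' * s : A) • n = (a * s' : A) • n' := by
    refine Subtype.ext ?_
    simp only [Submodule.coe_smul, Algebra.smul_def, map_mul]
    linear_combination algebraMap A Q a' * hs - algebraMap A Q a * hs'
  have h' := congrArg φ h
  simp only [map_smul, Algebra.smul_def, map_mul] at h'
  refine ((IsLocalization.map_units Q s).mul (IsLocalization.map_units Q s')).mul_left_cancel ?_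
  linear_combination h' + algebraMap A Q s * φ n * hs' - algebraMap A Q s' * φ n' * hs

/-- Homomorphisms between regular fractional ideals are multiplications. -/
theorem nonempty_div_linearEquiv {A Q : Type*} [CommRing A] [CommRing Q] [Algebra A Q]
    (M : Submonoid A) [IsLocalization M Q] {N : Submodule A Q} (N' : Submodule A Q) {x : A}
    (hx : x ∈ M) (hxN : algebraMap A Q x ∈ N) :
    Nonempty ((N' / N : Submodule A Q) ≃ₗ[A] (N →ₗ[A] N')) := by
  let F : (N' / N : Submodule A Q) →ₗ[A] (N →ₗ[A] N') :=
    LinearMap.mk₂ A (fun q n ↦ ⟨q * n, Submodule.mem_div_iff_forall_mul_mem.1 q.2 n n.2⟩)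
      (fun q q' n ↦ Subtype.ext (add_mul _ _ _)) (fun a q n ↦ Subtype.ext (smul_mul_assoc _ _ _))
      (fun q n n' ↦ Subtype.ext (mul_add _ _ _)) (fun a q n ↦ Subtype.ext (mul_smul_comm _ _ _))
  have hxu := IsLocalization.map_units Q ⟨x, hx⟩
  refine ⟨LinearEquiv.ofBijective F ⟨?_, fun φ ↦ ?_⟩⟩
  · intro q q' h
    have := congrArg Subtype.val (LinearMap.congr_fun h ⟨_, hxN⟩)
    exact Subtype.ext (hxu.mul_right_cancel this)
  · obtain ⟨q, hq⟩ : ∃ q, φ ⟨_, hxN⟩ = q * algebraMap A Q x :=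
      ⟨φ ⟨_, hxN⟩ * ↑hxu.unit⁻¹, by rw [mul_assoc, hxu.val_inv_mul, mul_one]⟩
    have hφ : ∀ n : N, φ n = q * n := fun n ↦ by
      refine hxu.mul_right_cancel ?_
      have : (φ n : Q) * algebraMap A Q x = φ ⟨_, hxN⟩ * n :=
        apply_mul_comm_of_isLocalization M (N'.subtype ∘ₗ φ) n ⟨_, hxN⟩
      rw [this, hq]
      ring
    refine ⟨⟨q, Submodule.mem_div_iff_forall_mul_mem.2 fun n hn ↦ ?_⟩, ?_⟩
    · rw [← hφ ⟨n, hn⟩]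
      exact (φ _).2
    · ext n
      exact (hφ n).symm

end FractionRing

section Birational

variable {R : Type u} [CommRing R] {S : Subalgebra R (FractionRing R)}

theorem mem_conductorFrac {q : FractionRing R} :
    q ∈ conductorFrac R S ↔ ∀ s ∈ S, q * s ∈ (1 : Submodule R (FractionRing R)) :=
  Submodule.mem_div_iff_forall_mul_mem

theorem conductorFrac_le_one : conductorFrac R S ≤ 1 := fun q hq ↦ by
  simpa using mem_conductorFrac.1 hq 1 S.one_mem

theorem one_le_toSubmodule : 1 ≤ Subalgebra.toSubmodule S := fun q hq ↦ by
  obtain ⟨a, rfl⟩ := Submodule.mem_one.1 hq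
  exact S.algebraMap_mem a

theorem mul_mem_conductorFrac {c s : FractionRing R} (hc : c ∈ conductorFrac R S) (hs : s ∈ S) :
    c * s ∈ conductorFrac R S :=
  mem_conductorFrac.2 fun t ht ↦ by
    rw [mul_assoc]
    exact mem_conductorFrac.1 hc _ (S.mul_mem hs ht)

variable (S) in
theorem exists_algebraMap_mem_conductorFrac [Module.Finite R S] :
    ∃ r ∈ nonZeroDivisors R, algebraMap R (FractionRing R) r ∈ conductorFrac R S := by
  have hfg : (Subalgebra.toSubmodule S).FG := Module.Finite.iff_fg.1 ‹_›
  obtain ⟨r, hr, h⟩ := FractionalIdeal.isFractional_of_fg (S := nonZeroDivisors R) hfg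
  refine ⟨r, hr, mem_conductorFrac.2 fun s hs ↦ ?_⟩
  rw [← Algebra.smul_def]
  exact Submodule.mem_one.2 (h s hs)

theorem conductorFrac_div_self [Module.Finite R S]
    (hR : ∀ x ∈ nonZeroDivisors R, DoubleColonProperty x) :
    conductorFrac R S / conductorFrac R S = Subalgebra.toSubmodule S := by
  obtain ⟨r, hr, hrC⟩ := exists_algebraMap_mem_conductorFrac S
  refine le_antisymm (fun q hq ↦ ?_) fun s hs ↦
    Submodule.mem_div_iff_forall_mul_mem.2 fun c hc ↦ mul_comm c s ▸ mul_mem_conductorFrac hc hs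
  refine one_div_one_div_le le_rfl hR hr hrC (Submonoid.one_mem _)
    (by rw [map_one]; exact S.one_mem) (Submodule.mem_div_iff_forall_mul_mem.2 fun c hc ↦ ?_)
  exact conductorFrac_le_one (Submodule.mem_div_iff_forall_mul_mem.1 hq c hc)

theorem nonempty_linearEquiv_conductorFrac_iff [Module.Finite R S] :
    Nonempty (S ≃ₗ[R] conductorFrac R S) ↔
      ∃ u : (FractionRing R)ˣ, ∀ q, (u : FractionRing R) * q ∈ conductorFrac R S ↔ q ∈ S := by
  obtain ⟨r, hr, hrC⟩ := exists_algebraMap_mem_conductorFrac S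
  constructor
  · rintro ⟨e⟩
    have he : ∀ s : S, e s = (e 1 : FractionRing R) * s := fun s ↦ by
      have := apply_mul_comm_of_isLocalization (nonZeroDivisors R) (N := Subalgebra.toSubmodule S)
        ((conductorFrac R S).subtype ∘ₗ e.toLinearMap) s (1 : S)
      simpa using this
    obtain ⟨s, hs⟩ := e.surjective ⟨_, hrC⟩
    have hu : IsUnit (e 1 : FractionRing R) := by
      refine isUnit_of_mul_isUnit_left (y := (s : FractionRing R)) ?_
      rw [← he, hs]
      exact IsLocalization.map_units _ ⟨r, hr⟩
    refine ⟨hu.unit, fun q ↦ ⟨fun hq ↦ ?_, fun hq ↦ ?_⟩⟩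
    · obtain ⟨s, hs⟩ := e.surjective ⟨_, hq⟩
      have : (e 1 : FractionRing R) * s = e 1 * q := by
        rw [← he, hs]
        rfl
      rw [← hu.mul_left_cancel this]
      exact s.2
    · have := he ⟨q, hq⟩
      rw [IsUnit.unit_spec, ← this]
      exact (e _).2
  · rintro ⟨u, hu⟩
    let F : S →ₗ[R] conductorFrac R S := LinearMap.codRestrict _
      (LinearMap.mulLeft R (u : FractionRing R) ∘ₗ S.val.toLinearMap) fun s ↦ (hu s).2 s.2
    refine ⟨LinearEquiv.ofBijective F ⟨fun s t h ↦ ?_, fun ⟨c, hc⟩ ↦ ?_⟩⟩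
    · exact Subtype.ext (u.isUnit.mul_left_cancel (congrArg Subtype.val h))
    · refine ⟨⟨((u⁻¹ : (FractionRing R)ˣ) : FractionRing R) * c, (hu _).1 (by rwa [Units.mul_inv_cancel_left])⟩, Subtype.ext ?_⟩
      exact Units.mul_inv_cancel_left u c

theorem doubleColonProperty_of_conductorFrac_eq
    (hR : ∀ x ∈ nonZeroDivisors R, DoubleColonProperty x) [Module.Finite R S]
    {u : (FractionRing R)ˣ} (hu : ∀ q, (u : FractionRing R) * q ∈ conductorFrac R S ↔ q ∈ S) {x : R}
    (hx : x ∈ nonZeroDivisors R) : DoubleColonProperty (algebraMap R S x) := by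
  intro I hI j hj
  obtain ⟨r, hr, hrC⟩ := exists_algebraMap_mem_conductorFrac S
  let N : Submodule R (FractionRing R) := (I.restrictScalars R).map S.val.toLinearMap
  have hrN : algebraMap R (FractionRing R) r ∈ 1 / N := by
    refine Submodule.mem_div_iff_forall_mul_mem.2 fun n hn ↦ ?_
    obtain ⟨i, -, rfl⟩ := hn
    exact mem_conductorFrac.1 hrC i i.2
  have hjN : (j : FractionRing R) ∈ 1 / (1 / N) := by
    refine Submodule.mem_div_iff_forall_mul_mem.2 fun q hq ↦ ?_
    have hq' : ∀ i ∈ I, (↑u⁻¹ : FractionRing R) * (q * i) ∈ S := fun i hi ↦ by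
      rw [← hu, Units.mul_inv_cancel_left, mem_conductorFrac]
      intro s hs
      rw [mul_assoc]
      exact Submodule.mem_div_iff_forall_mul_mem.1 hq _
        ⟨i * ⟨s, hs⟩, I.mul_mem_right _ hi, rfl⟩
    obtain ⟨d, hd⟩ := Ideal.mem_span_singleton'.1 <| hj ⟨_, hq' _ hI⟩ fun i hi ↦
      Ideal.mem_span_singleton'.2 ⟨⟨_, hq' i hi⟩, Subtype.ext (by
        change (↑u⁻¹ : FractionRing R) * (q * i) * algebraMap R (FractionRing R) x =
          (↑u⁻¹ : FractionRing R) * (q * algebraMap R (FractionRing R) x) * i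
        ring)⟩
    have hd' : (d : FractionRing R) * algebraMap R (FractionRing R) x =
      (↑u⁻¹ : FractionRing R) * (q * algebraMap R (FractionRing R) x) * j := congrArg Subtype.val hd
    have : (u : FractionRing R) * (d : FractionRing R) = j * q := by
      refine (IsLocalization.map_units _ (⟨x, hx⟩ : nonZeroDivisors R)).mul_right_cancel ?_
      linear_combination (u : FractionRing R) * hd' +
        q * algebraMap R (FractionRing R) x * j * u.mul_inv
    rw [← this]
    exact conductorFrac_le_one ((hu d).2 d.2)
  obtain ⟨j', hj', e⟩ := one_div_one_div_le le_rfl hR hr hrN hx ⟨_, hI, rfl⟩ hjN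
  rwa [← Subtype.ext e]

end Birational

section FiniteBirational

variable {R : Type u} [CommRing R] (S : Subalgebra R (FractionRing R))

theorem isLocalization_algebraMapSubmonoid :
    IsLocalization (Algebra.algebraMapSubmonoid S (nonZeroDivisors R)) (FractionRing R) where
  map_units := by
    rintro ⟨_, r, hr, rfl⟩
    exact IsLocalization.map_units (FractionRing R) (⟨r, hr⟩ : nonZeroDivisors R)
  surj q := by
    obtain ⟨⟨a, s⟩, h⟩ := IsLocalization.surj (nonZeroDivisors R) q
    exact ⟨⟨algebraMap R S a, ⟨_, s, s.2, rfl⟩⟩, h⟩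
  exists_of_eq h := ⟨1, by rw [Subtype.ext h]⟩

theorem algebraMapSubmonoid_le_nonZeroDivisors :
    Algebra.algebraMapSubmonoid S (nonZeroDivisors R) ≤ nonZeroDivisors S := by
  rintro _ ⟨r, hr, rfl⟩
  refine mem_nonZeroDivisors_of_injective (f := S.val) Subtype.val_injective ?_
  exact (IsLocalization.map_units (FractionRing R)
    (⟨r, hr⟩ : nonZeroDivisors R)).mem_nonZeroDivisors

variable {S}

theorem isMaximal_of_algebraMap_mem [Module.Finite R S] [Ring.KrullDimLE 1 R] {x : R}
    (hx : x ∈ nonZeroDivisors R) (n : Ideal S) [n.IsMaximal]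
    (p : Ideal (Localization.AtPrime n)) (hp : p.IsPrime)
    (hxp : algebraMap S (Localization.AtPrime n) (algebraMap R S x) ∈ p) : p.IsMaximal := by
  let P : Ideal S := p.comap (algebraMap S (Localization.AtPrime n))
  have hP : P.IsMaximal := Ideal.isMaximal_of_isIntegral_of_isMaximal_comap (R := R) P
    (isMaximal_of_mem_nonZeroDivisors hx _ inferInstance hxp)
  have hPn : P = n := by
    refine hP.eq_of_le (Ideal.IsPrime.ne_top inferInstance) ?_
    rw [← Localization.AtPrime.under_maximalIdeal (I := n)]
    exact Ideal.comap_mono (IsLocalRing.le_maximalIdeal hp.ne_top)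
  have : p = IsLocalRing.maximalIdeal (Localization.AtPrime n) := by
    rw [← IsLocalization.map_under n.primeCompl (Localization.AtPrime n) p,
      ← Localization.AtPrime.map_eq_maximalIdeal]
    exact congrArg _ hPn
  rw [this]
  infer_instance

theorem isGorensteinRing_of_doubleColonProperty [IsLocalRing R] [IsNoetherianRing R]
    [Module.Finite R S] {x : R} (hx : x ∈ nonZeroDivisors R)
    (hxm : x ∈ IsLocalRing.maximalIdeal R) (h : DoubleColonProperty (algebraMap R S x)) :
    IsGorensteinRing S := by
  have : IsNoetherianRing S := IsNoetherianRing.of_finite R S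
  refine ⟨this, fun n hn ↦ ?_⟩
  have : IsNoetherianRing (Localization.AtPrime n) :=
    IsLocalization.isNoetherianRing n.primeCompl _ inferInstance
  refine (h.localization (L := Localization.AtPrime n) n.primeCompl).isGorensteinLocalRing ?_ ?_
  · exact IsLocalization.map_nonZeroDivisors_le n.primeCompl _
      ⟨_, algebraMapSubmonoid_le_nonZeroDivisors S ⟨x, hx, rfl⟩, rfl⟩
  · change algebraMap R S x ∈ (IsLocalRing.maximalIdeal (Localization.AtPrime n)).under S
    rw [Localization.AtPrime.under_maximalIdeal, ← Ideal.mem_comap,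
      IsLocalRing.eq_maximalIdeal (Ideal.isMaximal_comap_of_isIntegral_of_isMaximal (R := R) n)]
    exact hxm

theorem IsGorensteinRing.doubleColonProperty_algebraMap [Module.Finite R S] [Ring.KrullDimLE 1 R]
    (h : IsGorensteinRing S) {x : R} (hx : x ∈ nonZeroDivisors R) :
    DoubleColonProperty (algebraMap R S x) := by
  have := h.1
  refine .of_localization_maximal fun n _ ↦ (h.2 n).doubleColonProperty ?_
    (isMaximal_of_algebraMap_mem hx n)
  exact IsLocalization.map_nonZeroDivisors_le n.primeCompl _
    ⟨_, algebraMapSubmonoid_le_nonZeroDivisors S ⟨x, hx, rfl⟩, rfl⟩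

variable (S) in
theorem finite_setOf_isMaximal [IsLocalRing R] [Module.Finite R S] :
    {n : Ideal S | n.IsMaximal}.Finite :=
  (Algebra.QuasiFinite.finite_primesOver (IsLocalRing.maximalIdeal R)).subset fun n hn ↦
    have : n.IsMaximal := hn
    ⟨inferInstance, ⟨(IsLocalRing.eq_maximalIdeal
      (Ideal.isMaximal_comap_of_isIntegral_of_isMaximal (R := R) n)).symm⟩⟩

variable (S) in
/-- The conductor of `S`, as a module over `S`. -/
noncomputable def conductorFracExtension : Submodule S (FractionRing R) where
  __ := (conductorFrac R S).toAddSubmonoid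
  smul_mem' s c hc := by
    rw [Subalgebra.smul_def, smul_eq_mul, mul_comm]
    exact mul_mem_conductorFrac hc s.2

theorem exists_unit_of_doubleColonProperty [IsLocalRing R] [Module.Finite R S]
    (hR : ∀ x ∈ nonZeroDivisors R, DoubleColonProperty x)
    (hS : ∀ x ∈ nonZeroDivisors R, DoubleColonProperty (algebraMap R S x)) :
    ∃ u : (FractionRing R)ˣ, ∀ q, (u : FractionRing R) * q ∈ conductorFrac R S ↔ q ∈ S := by
  let M := Algebra.algebraMapSubmonoid S (nonZeroDivisors R)
  have : IsLocalization M (FractionRing R) := isLocalization_algebraMapSubmonoid S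
  have hM : M ≤ nonZeroDivisors S := algebraMapSubmonoid_le_nonZeroDivisors S
  have hSM : ∀ x ∈ M, DoubleColonProperty x := by
    rintro _ ⟨x, hx, rfl⟩
    exact hS x hx
  obtain ⟨r, hr, hrC⟩ := exists_algebraMap_mem_conductorFrac S
  have hrM : algebraMap R S r ∈ M := ⟨r, hr, rfl⟩
  let C : Submodule S (FractionRing R) := conductorFracExtension S
  have hC1 : C ≤ 1 := fun c hc ↦
    Submodule.mem_one.2 ⟨⟨c, one_le_toSubmodule (conductorFrac_le_one hc)⟩, rfl⟩
  have hone : (1 : FractionRing R) ∈ 1 / C := Submodule.mem_div_iff_forall_mul_mem.2 fun c hc ↦ by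
    simpa using hC1 hc
  have hJle : C * (1 / C) ≤ 1 := Submodule.mul_le.2 fun c hc d hd ↦ by
    rw [mul_comm]
    exact Submodule.mem_div_iff_forall_mul_mem.1 hd c hc
  have hCrefl : 1 / (1 / C) ≤ C := one_div_one_div_le hM hSM (r := 1) (x := algebraMap R S r)
    M.one_mem (by simpa using hone) hrM hrC
  have hJinv : 1 / (C * (1 / C)) ≤ 1 := fun q hq ↦ by
    have hqC : q ∈ conductorFrac R S / conductorFrac R S := by
      refine Submodule.mem_div_iff_forall_mul_mem.2 fun c hc ↦ hCrefl ?_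
      refine Submodule.mem_div_iff_forall_mul_mem.2 fun d hd ↦ ?_
      rw [mul_assoc]
      exact Submodule.mem_div_iff_forall_mul_mem.1 hq _ (Submodule.mul_mem_mul hc hd)
    rw [conductorFrac_div_self hR] at hqC
    exact Submodule.mem_one.2 ⟨⟨q, hqC⟩, rfl⟩
  have hJ : C * (1 / C) = 1 := by
    refine le_antisymm hJle (Submodule.one_le.2 ?_)
    refine one_div_one_div_le hM hSM (r := 1) (x := algebraMap R S r) M.one_mem ?_ hrM ?_ ?_
    · refine Submodule.mem_div_iff_forall_mul_mem.2 fun c hc ↦ ?_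
      simpa using hJle hc
    · simpa using Submodule.mul_mem_mul (show _ ∈ C from hrC) hone
    · refine Submodule.mem_div_iff_forall_mul_mem.2 fun q hq ↦ ?_
      simpa using hJinv hq
  have hCfrac : IsFractional M C := ⟨1, M.one_mem, fun c hc ↦ by
    simpa [IsLocalization.IsInteger] using Submodule.mem_one.1 (hC1 hc)⟩
  have hDfrac : IsFractional M (1 / C) := ⟨_, hrM, fun d hd ↦ by
    rw [Algebra.smul_def, mul_comm]
    exact Submodule.mem_one.1 (Submodule.mem_div_iff_forall_mul_mem.1 hd _ hrC)⟩
  obtain ⟨u, hu⟩ := FractionalIdeal.isPrincipal.of_finite_maximals_of_inv hM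
    (finite_setOf_isMaximal S) (⟨C, hCfrac⟩ : FractionalIdeal M (FractionRing R)) ⟨1 / C, hDfrac⟩
    (FractionalIdeal.coeToSubmodule_injective
      ((FractionalIdeal.coe_mul _ _).trans (hJ.trans FractionalIdeal.coe_one.symm)))
  have hu' : ∀ c, c ∈ conductorFrac R S ↔ ∃ s : S, u * s = c := fun c ↦ by
    change c ∈ C ↔ _
    change C = _ at hu
    rw [hu, Submodule.mem_span_singleton]
    simp only [Subalgebra.smul_def, smul_eq_mul, mul_comm]
  obtain ⟨s, hs⟩ := (hu' _).1 hrC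
  have huu : IsUnit u := isUnit_of_mul_isUnit_left (y := (s : FractionRing R)) <| by
    rw [hs]
    exact IsLocalization.map_units _ (⟨r, hr⟩ : nonZeroDivisors R)
  refine ⟨huu.unit, fun q ↦ ?_⟩
  rw [hu', IsUnit.unit_spec]
  exact ⟨fun ⟨s, hs⟩ ↦ huu.mul_left_cancel hs ▸ s.2, fun hq ↦ ⟨⟨q, hq⟩, rfl⟩⟩

end FiniteBirational

/-- for a module finite birational extension `S` of a 1-dimensional
Gorenstein local ring `R`, the following are equivalent: (i) `S` is Gorenstein;
(ii) `S ≅ Hom_R(S, R)`; (iii) the conductor `c_R(S)` is a stable ideal. -/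
theorem gorenstein_iff_selfdual_iff_conductor_stable (R : Type u) [CommRing R]
    (hGor : IsGorensteinLocalRing R) (hdim : ringKrullDim R = 1)
    (S : Subalgebra R (FractionRing R)) (hfin : Module.Finite R S) :
    (IsGorensteinRing S ↔ Nonempty (S ≃ₗ[R] (S →ₗ[R] R))) ∧
    (Nonempty (S ≃ₗ[R] (S →ₗ[R] R)) ↔
      Nonempty ((↥(conductorFrac R S)) ≃ₗ[R]
        ((↥(conductorFrac R S)) →ₗ[R] (↥(conductorFrac R S))))) := by
  have := hGor.1
  have := hGor.2.1
  have hdim₁ : Ring.KrullDimLE 1 R := Ring.krullDimLE_iff.2 hdim.le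
  have hdim₀ : ¬ Ring.KrullDimLE 0 R := fun h ↦ by
    have := Ring.krullDimLE_iff.1 h
    rw [hdim] at this
    exact absurd this (by decide)
  have hR : ∀ x ∈ nonZeroDivisors R, DoubleColonProperty x := fun x hx ↦
    hGor.doubleColonProperty hx (isMaximal_of_mem_nonZeroDivisors hx)
  obtain ⟨r, hr, hrC⟩ := exists_algebraMap_mem_conductorFrac S
  obtain ⟨e₁⟩ : Nonempty (conductorFrac R S ≃ₗ[R] (S →ₗ[R] R)) := by
    obtain ⟨e⟩ := nonempty_div_linearEquiv (Q := FractionRing R) (nonZeroDivisors R)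
      (N := Subalgebra.toSubmodule S) 1 (Submonoid.one_mem _) (by rw [map_one]; exact S.one_mem)
    refine ⟨e.trans (LinearEquiv.congrRight (LinearEquiv.symm ?_))⟩
    exact (LinearEquiv.ofInjective (Algebra.linearMap R (FractionRing R))
      (IsFractionRing.injective R _)).trans (LinearEquiv.ofEq _ _ Submodule.one_eq_range.symm)
  obtain ⟨e₂⟩ : Nonempty (S ≃ₗ[R] (conductorFrac R S →ₗ[R] conductorFrac R S)) := by
    obtain ⟨e⟩ := nonempty_div_linearEquiv (nonZeroDivisors R) (conductorFrac R S) hr hrC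
    exact ⟨(LinearEquiv.ofEq _ _ (conductorFrac_div_self hR).symm).trans e⟩
  have hiff : Nonempty (S ≃ₗ[R] (S →ₗ[R] R)) ↔ Nonempty (S ≃ₗ[R] conductorFrac R S) :=
    ⟨fun ⟨e⟩ ↦ ⟨e.trans e₁.symm⟩, fun ⟨e⟩ ↦ ⟨e.trans e₁⟩⟩
  refine ⟨?_, hiff.trans ⟨fun ⟨e⟩ ↦ ⟨e.symm.trans e₂⟩, fun ⟨e⟩ ↦ ⟨e₂.trans e.symm⟩⟩⟩
  rw [hiff, nonempty_linearEquiv_conductorFrac_iff]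
  constructor
  · exact fun h ↦ exists_unit_of_doubleColonProperty hR fun x hx ↦
      h.doubleColonProperty_algebraMap hx
  · rintro ⟨u, hu⟩
    obtain ⟨x, hx, hxm⟩ := hGor.exists_mem_nonZeroDivisors hdim₀
    exact isGorensteinRing_of_doubleColonProperty hx hxm
      (doubleColonProperty_of_conductorFrac_eq hR hu hx)
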